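/- If a normed real vector space V is roughly isometric to a Ptolemy metric space, then V is itself a Ptolemy metric space, i.e. ‖x−y‖·‖u−v‖ ≤ ‖x−u‖·‖y−v‖ + ‖x−v‖·‖y−u‖ for all x,y,u,v ∈ V. -/

import Mathlib

/-!
The Ptolemy inequality is homogeneous of degree two under scaling, while a rough isometry perturbs
it only by terms of degree at most one. Comparing the points `t • x`, `t • y`, `t • u`, `t • v` of
`V` with their images in the Ptolemy space bounds `t²` times the Ptolemy defect by an affine
function of `t` (`mul_sub_le_of_abs_sub_le` controls the product of the two roughly known
distances from below). Letting `t → ∞` shows that the defect is nonpositive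
(`nonpos_of_mul_sq_le_affine`).
-/

/-- A quadratic with an affine upper bound on `(0, ∞)` has nonpositive leading coefficient. -/
lemma nonpos_of_mul_sq_le_affine {δ B C : ℝ} (hB : 0 ≤ B) (hC : 0 ≤ C)
    (h : ∀ t : ℝ, 0 < t → δ * t ^ 2 ≤ t * B + C) : δ ≤ 0 := by
  by_contra! hδ
  have hq : 0 ≤ (B + C) / δ := by positivity
  have ht := h ((B + C) / δ + 1) (by positivity)
  have e : δ * ((B + C) / δ + 1) ^ 2 = ((B + C) / δ + 1) * (B + C + δ) := by
    field_simp
  rw [e] at ht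
  nlinarith [mul_nonneg hq hC, mul_nonneg hq hδ.le]

/-- The lower bound on `p * q` for `p`, `q` within `A` of `a`, `b`. Unlike the naive
`(a - A) * (b - A) ≤ p * q`, it holds even if `a - A` or `b - A` is negative. -/
lemma mul_sub_le_of_abs_sub_le {a b p q A : ℝ} (ha : 0 ≤ a) (hA : 0 ≤ A) (hq : 0 ≤ q)
    (hp : a - A ≤ p) (hq₁ : b - A ≤ q) (hq₂ : q ≤ b + A) :
    a * b - A * (a + b) - A ^ 2 ≤ p * q := by
  nlinarith [mul_le_mul_of_nonneg_right hp hq, mul_le_mul_of_nonneg_left hq₁ ha,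
    mul_le_mul_of_nonneg_left hq₂ hA]


/-- A metric space is Ptolemy if `|xy|·|uv| ≤ |xu|·|yv| + |xv|·|yu|` for all points. -/
def IsPtolemy (X : Type*) [MetricSpace X] : Prop :=
  ∀ x y u v : X, dist x y * dist u v ≤ dist x u * dist y v + dist x v * dist y u

/-- **Lemma 3.2.** If a normed real vector space `V` is roughly isometric to a Ptolemy metric
space (via a rough isometry `φ : V → X` with constant `A`), then `V` is itself Ptolemy. -/
theorem normed_space_roughly_isometric_to_ptolemy_is_ptolemy
    {V : Type*} [NormedAddCommGroup V] [NormedSpace ℝ V]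
    {X : Type*} [MetricSpace X] (hpt : IsPtolemy X)
    (φ : V → X) (A : ℝ) (hA : 0 ≤ A)
    (hrough : ∀ v v' : V,
      dist v v' - A ≤ dist (φ v) (φ v') ∧ dist (φ v) (φ v') ≤ dist v v' + A)
    (hdense : ∀ x : X, ∃ v : V, dist x (φ v) ≤ A) :
    ∀ x y u v : V, ‖x - y‖ * ‖u - v‖ ≤ ‖x - u‖ * ‖y - v‖ + ‖x - v‖ * ‖y - u‖ := by
  intro x y u v
  refine sub_nonpos.mp (nonpos_of_mul_sq_le_affine
    (B := A * (‖x - y‖ + ‖u - v‖ + ‖x - u‖ + ‖y - v‖ + ‖x - v‖ + ‖y - u‖))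
    (C := 3 * A ^ 2) (by positivity) (by positivity) fun t ht => ?_)
  have hd : ∀ a b : V, dist (t • a) (t • b) = t * ‖a - b‖ := fun a b => by
    rw [dist_smul₀, Real.norm_of_nonneg ht.le, dist_eq_norm]
  have lo : ∀ a b : V, t * ‖a - b‖ - A ≤ dist (φ (t • a)) (φ (t • b)) := fun a b =>
    hd a b ▸ (hrough (t • a) (t • b)).1
  have up : ∀ a b : V, dist (φ (t • a)) (φ (t • b)) ≤ t * ‖a - b‖ + A := fun a b =>
    hd a b ▸ (hrough (t • a) (t • b)).2
  have h₁ := mul_sub_le_of_abs_sub_le (by positivity) hA dist_nonneg (lo x y) (lo u v) (up u v)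
  have h₂ := mul_le_mul (up x u) (up y v) dist_nonneg (by positivity)
  have h₃ := mul_le_mul (up x v) (up y u) dist_nonneg (by positivity)
  have h₄ := hpt (φ (t • x)) (φ (t • y)) (φ (t • u)) (φ (t • v))
  linarith
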